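/- arXiv:1011.3322 — 3 statements merged into one kernel-verified Lean document; each statement's English description precedes it below -/
import Mathlib

section
/- Let C be a fiat category and let F and G be indecomposable 1-morphisms of C. Then F <=_LR G if and only if there exists an indecomposable 1-morphism L with F <=_R L and L <=_L G, and also if and only if there exists an indecomposable 1-morphism L' with F <=_L L' and L' <=_R G. In other words, as relations on indecomposable 1-morphisms, <=_LR equals the composite relation <=_R followed by <=_L, and also equals <=_L followed by <=_R. -/
open CategoryTheory CategoryTheory.Limits

universe w v u

attribute [local instance] CategoryTheory.Limits.hasBinaryBiproducts_of_finite_biproducts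

namespace CellTwoRep

variable {C : Type u} [Bicategory.{w, v} C]

/-- `G` is a retract (direct summand) of `F` in a hom-category of the bicategory `C`. -/
def IsSummand {a b : C} (G F : a ⟶ b) : Prop :=
  ∃ (ι : G ⟶ F) (π : F ⟶ G), ι ≫ π = 𝟙 G

/-- Cast a 1-morphism along equalities of objects. -/
def castHom {a a' b b' : C} (h₁ : a = a') (h₂ : b = b') (f : a ⟶ b) : a' ⟶ b' :=
  h₁ ▸ h₂ ▸ f

section Indec

variable [∀ a b : C, Preadditive (a ⟶ b)] [∀ a b : C, HasFiniteBiproducts (a ⟶ b)]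

/-- An indecomposable 1-morphism: nonzero, and any decomposition as a biproduct is trivial. -/
def Indec {a b : C} (F : a ⟶ b) : Prop :=
  ¬ IsZero F ∧ ∀ G H : a ⟶ b, Nonempty (F ≅ G ⊞ H) → IsZero G ∨ IsZero H

end Indec

/-- A 1-morphism of `C` together with its endpoints. -/
structure OneMor (C : Type u) [Bicategory.{w, v} C] where
  src : C
  tgt : C
  mor : src ⟶ tgt

/-- right preorder: `F ≤_R G` iff `G` is a direct summand of `H ∘ F` for some `H`. -/
def leR (F G : OneMor C) : Prop :=
  ∃ (h : F.src = G.src) (H : F.tgt ⟶ G.tgt),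
    IsSummand G.mor (castHom h rfl F.mor ≫ H)

/-- left preorder: `F ≤_L G` iff `G` is a direct summand of `F ∘ H` for some `H`. -/
def leL (F G : OneMor C) : Prop :=
  ∃ (h : F.tgt = G.tgt) (H : G.src ⟶ F.src),
    IsSummand G.mor (H ≫ castHom rfl h F.mor)

/-- two-sided preorder: `F ≤_LR G` iff `G` is a direct summand of `H₂ ∘ F ∘ H₁`. -/
def leLR (F G : OneMor C) : Prop :=
  ∃ (H₁ : G.src ⟶ F.src) (H₂ : F.tgt ⟶ G.tgt),
    IsSummand G.mor (H₁ ≫ F.mor ≫ H₂)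

def simR (F G : OneMor C) : Prop := leR F G ∧ leR G F
def simL (F G : OneMor C) : Prop := leL F G ∧ leL G F
def simLR (F G : OneMor C) : Prop := leLR F G ∧ leLR G F

/-- Isomorphism of 1-morphisms (with possibly different, but equal, endpoints). -/
def IsoM (F G : OneMor C) : Prop :=
  ∃ (h₁ : F.src = G.src) (h₂ : F.tgt = G.tgt), Nonempty (castHom h₁ h₂ F.mor ≅ G.mor)

section Cells

variable [∀ a b : C, Preadditive (a ⟶ b)] [∀ a b : C, HasFiniteBiproducts (a ⟶ b)]

def IndecM (F : OneMor C) : Prop := Indec F.mor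

/-- A right cell: the `∼_R`-equivalence class of some indecomposable 1-morphism. -/
def IsRightCell (R : Set (OneMor C)) : Prop :=
  ∃ F : OneMor C, IndecM F ∧ R = {G | IndecM G ∧ simR F G}

def IsLeftCell (L : Set (OneMor C)) : Prop :=
  ∃ F : OneMor C, IndecM F ∧ L = {G | IndecM G ∧ simL F G}

def IsTwoSidedCell (Q : Set (OneMor C)) : Prop :=
  ∃ F : OneMor C, IndecM F ∧ Q = {G | IndecM G ∧ simLR F G}

/-- The right order on cells. -/
def cellLeR (R R' : Set (OneMor C)) : Prop := ∃ F ∈ R, ∃ G ∈ R', leR F G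

/-- The left order on cells. -/
def cellLeL (L L' : Set (OneMor C)) : Prop := ∃ F ∈ L, ∃ G ∈ L', leL F G

/-- A regular two-sided cell: distinct right cells inside it are incomparable for `≤_R`. -/
def IsRegular (Q : Set (OneMor C)) : Prop :=
  IsTwoSidedCell Q ∧ ∀ R R' : Set (OneMor C), IsRightCell R → IsRightCell R' →
    R ⊆ Q → R' ⊆ Q → R ≠ R' → ¬ cellLeR R R' ∧ ¬ cellLeR R' R

/-- A strongly regular two-sided cell: regular, and every left cell meets every right cell
inside it in exactly one isomorphism class. -/
def IsStronglyRegular (Q : Set (OneMor C)) : Prop :=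
  IsRegular Q ∧ ∀ L R : Set (OneMor C), IsLeftCell L → IsRightCell R → L ⊆ Q → R ⊆ Q →
    ∃ F, F ∈ L ∩ R ∧ ∀ G, G ∈ L ∩ R → IsoM F G

end Cells

/-- All the axioms of a fiat (`k`-finitary with involution and adjunctions) 2-category,
on top of a strict bicategory whose hom-categories are additive and `k`-linear. -/
structure FiatAxioms (k : Type*) [Field k] [IsAlgClosed k]
    (C : Type u) [Bicategory.{w, v} C] [Bicategory.Strict C]
    [∀ a b : C, Preadditive (a ⟶ b)] [∀ a b : C, HasFiniteBiproducts (a ⟶ b)]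
    [∀ a b : C, Linear k (a ⟶ b)] : Type (max u v w) where
  /-- finitely many objects -/
  finObj : Finite C
  /-- each hom-category is idempotent complete -/
  idemComplete : ∀ a b : C, IsIdempotentComplete (a ⟶ b)
  /-- finite-dimensional spaces of 2-morphisms -/
  finDim : ∀ (a b : C) (f g : a ⟶ b), FiniteDimensional k (f ⟶ g)
  /-- finitely many isomorphism classes of indecomposable 1-morphisms -/
  finIndec : ∀ a b : C, ∃ (n : ℕ) (ι : Fin n → (a ⟶ b)),
      ∀ F : a ⟶ b, Indec F → ∃ i, Nonempty (F ≅ ι i)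
  /-- each identity 1-morphism is indecomposable -/
  idIndec : ∀ a : C, Indec (𝟙 a)
  /-- horizontal composition is additive in the second variable -/
  whiskerLeft_add : ∀ {a b c : C} (f : a ⟶ b) {g h : b ⟶ c} (η θ : g ⟶ h),
      Bicategory.whiskerLeft f (η + θ) =
        Bicategory.whiskerLeft f η + Bicategory.whiskerLeft f θ
  /-- horizontal composition is additive in the first variable -/
  whiskerRight_add : ∀ {a b c : C} {f g : a ⟶ b} (η θ : f ⟶ g) (h : b ⟶ c),
      Bicategory.whiskerRight (η + θ) h =
        Bicategory.whiskerRight η h + Bicategory.whiskerRight θ h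
  /-- the involution on 1-morphisms -/
  star : ∀ {a b : C}, (a ⟶ b) → (b ⟶ a)
  /-- the involution on 2-morphisms -/
  star2 : ∀ {a b : C} {f g : a ⟶ b}, (f ⟶ g) → (star f ⟶ star g)
  star2_id : ∀ {a b : C} (f : a ⟶ b), star2 (𝟙 f) = 𝟙 (star f)
  star2_comp : ∀ {a b : C} {f g h : a ⟶ b} (η : f ⟶ g) (θ : g ⟶ h),
      star2 (η ≫ θ) = star2 η ≫ star2 θ
  /-- the involution is a weak anti-homomorphism -/
  starComp : ∀ {a b c : C} (f : a ⟶ b) (g : b ⟶ c),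
      Nonempty (star (f ≫ g) ≅ star g ≫ star f)
  starId : ∀ a : C, Nonempty (star (𝟙 a) ≅ 𝟙 a)
  /-- the involution is weakly involutive -/
  starStar : ∀ {a b : C} (f : a ⟶ b), Nonempty (star (star f) ≅ f)
  /-- adjunctions: every 1-morphism `f` is left adjoint to `star f` -/
  adj : ∀ {a b : C} (f : a ⟶ b), Nonempty (Bicategory.Adjunction f (star f))

/-!
Suppose `G` is an indecomposable summand of `H₁ ≫ F ≫ H₂`. Write `F ≫ H₂` as a finite direct sum of
indecomposables `L`. Since `H₁ ≫ -` is additive, `G` is a summand of the direct sum of the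
`H₁ ≫ L`, and since `End G` is local, `G` is a summand of a single `H₁ ≫ L`; then
`F ≤_R L ≤_L G`. Bracketing the composite as `(H₁ ≫ F) ≫ H₂` gives the other order.

Both facts about indecomposables come from finite-dimensional spaces of 2-morphisms: splitting off
a nonzero summand lowers `dim End`, and `End G` is an Artinian ring whose only idempotents are `0`
and `1`, hence local.
-/

theorem nonempty_retract_of_isUnit_comp {E : Type*} [Category* E] {X Y : E} {f : X ⟶ Y}
    {g : Y ⟶ X} (h : IsUnit (M := End X) (f ≫ g)) : Nonempty (Retract X Y) :=
  have : IsIso (f ≫ g) := (isUnit_iff_isIso _).1 h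
  ⟨⟨f, g ≫ inv (f ≫ g), by rw [← Category.assoc, IsIso.hom_inv_id]⟩⟩

section KrullSchmidt

variable {D E : Type*} [Category* D] [Category* E] [Preadditive D] [Preadditive E]

/-- Finite direct sums of indecomposable objects, built up from binary biproducts so that
statements about them can be proved by induction. -/
inductive IsSumOfIndecomposables [HasBinaryBiproducts D] : D → Prop
  | of_isZero {X : D} (hX : IsZero X) : IsSumOfIndecomposables X
  | of_indecomposable {X : D} (hX : Indecomposable X) : IsSumOfIndecomposables X
  | of_iso_biprod {X A B : D} (φ : X ≅ A ⊞ B) (hA : IsSumOfIndecomposables A)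
      (hB : IsSumOfIndecomposables B) : IsSumOfIndecomposables X

/-- Krull–Schmidt categories. The usual definition, that every object is a finite direct sum of
objects with local endomorphism rings, is split into its two halves. -/
structure IsKrullSchmidt (D : Type*) [Category* D] [Preadditive D] [HasBinaryBiproducts D] :
    Prop where
  isSumOfIndecomposables (X : D) : IsSumOfIndecomposables X
  isLocalRing_end {X : D} (hX : Indecomposable X) : IsLocalRing (End X)

theorem nonempty_retract_or_of_retract_biprod {G A B : E} [HasBinaryBiproduct A B]
    [IsLocalRing (End G)] (r : Retract G (A ⊞ B)) :
    Nonempty (Retract G A) ∨ Nonempty (Retract G B) := by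
  let x : End G := (r.i ≫ biprod.fst) ≫ biprod.inl ≫ r.r
  let y : End G := (r.i ≫ biprod.snd) ≫ biprod.inr ≫ r.r
  have hxy : x + y = 1 := by
    calc x + y = r.i ≫ (biprod.fst ≫ biprod.inl + biprod.snd ≫ biprod.inr) ≫ r.r := by
          simp [x, y, -biprod.total]
      _ = 𝟙 G := by simp
  exact (IsLocalRing.isUnit_or_isUnit_of_add_one hxy).imp
    nonempty_retract_of_isUnit_comp nonempty_retract_of_isUnit_comp

theorem not_isZero_of_isLocalRing_end {G : E} [IsLocalRing (End G)] : ¬ IsZero G := fun hG =>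
  one_ne_zero (α := End G) ((IsZero.iff_id_eq_zero G).1 hG)

theorem IsSumOfIndecomposables.exists_indecomposable_retract [HasBinaryBiproducts D]
    (Φ : D ⥤ E) [Φ.Additive] {G : E} [IsLocalRing (End G)] {X : D}
    (hX : IsSumOfIndecomposables X) (r : Retract G (Φ.obj X)) :
    ∃ L : D, Indecomposable L ∧ Nonempty (Retract L X) ∧ Nonempty (Retract G (Φ.obj L)) := by
  induction hX with
  | of_isZero hX =>
    exact absurd (IsZero.of_mono r.i (Φ.map_isZero hX)) not_isZero_of_isLocalRing_end
  | @of_indecomposable X hX => exact ⟨X, hX, ⟨Retract.refl X⟩, ⟨r⟩⟩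
  | @of_iso_biprod X A B φ _ _ ihA ihB =>
    have := preservesBinaryBiproducts_of_preservesBiproducts Φ
    rcases nonempty_retract_or_of_retract_biprod
      (r.trans (.ofIso (Φ.mapIso φ ≪≫ Φ.mapBiprod A B))) with ⟨⟨s⟩⟩ | ⟨⟨s⟩⟩
    · obtain ⟨L, hL, ⟨t⟩, hGL⟩ := ihA s
      exact ⟨L, hL, ⟨t.trans ⟨biprod.inl ≫ φ.inv, φ.hom ≫ biprod.fst, by simp⟩⟩, hGL⟩
    · obtain ⟨L, hL, ⟨t⟩, hGL⟩ := ihB s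
      exact ⟨L, hL, ⟨t.trans ⟨biprod.inr ≫ φ.inv, φ.hom ≫ biprod.snd, by simp⟩⟩, hGL⟩

end KrullSchmidt

section FiniteDimensional

-- Fitting's lemma for right multiplication by `x`: `R` is the direct sum of the left ideals
-- `{u | u * x ^ n = 0}` and `R * x ^ n`, and the components of `1` are idempotent.
theorem isLocalRing_of_isIdempotentElem_eq_zero_or_one {R : Type*} [Ring R]
    [IsArtinianRing R] [Nontrivial R]
    (h_idem : ∀ e : R, IsIdempotentElem e → e = 0 ∨ e = 1) : IsLocalRing R := by
  refine .of_isUnit_or_isUnit_one_sub_self fun x => ?_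
  let f : Module.End R R := LinearMap.toSpanSingleton R R x
  have hf (n : ℕ) (u : R) : (f ^ n) u = u * x ^ n := by
    induction n generalizing u with
    | zero => simp
    | succ n ih => rw [pow_succ, Module.End.mul_apply, ih, pow_succ', ← mul_assoc]; simp [f]
  obtain ⟨n, hcompl, hn⟩ :=
    (f.eventually_isCompl_ker_pow_range_pow.and (Filter.eventually_gt_atTop 0)).exists
  obtain ⟨u, v, hu, hv, huv⟩ := Submodule.codisjoint_iff_exists_add_eq.1 hcompl.codisjoint 1
  have hv_idem : IsIdempotentElem v := by
    have hvu : v * u = v - v * v := by rw [← mul_one_sub, ← huv, add_sub_cancel_right]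
    have : v * u = 0 := Submodule.disjoint_def.1 hcompl.disjoint _ (Submodule.smul_mem _ v hu)
      (hvu ▸ Submodule.sub_mem _ hv (Submodule.smul_mem _ v hv))
    exact (sub_eq_zero.1 (hvu.symm.trans this)).symm
  rcases h_idem v hv_idem with rfl | rfl
  · have hx : x ^ n = 0 := by simpa [show u = 1 by simpa using huv, hf] using hu
    exact .inr (IsNilpotent.isUnit_one_sub ⟨n, hx⟩)
  · obtain ⟨c, hc⟩ := hv
    have hcx : c * x ^ (n - 1) * x = 1 := by
      rw [mul_assoc, ← pow_succ, Nat.sub_add_cancel hn, ← hf, hc]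
    exact .inl (IsUnit.of_mul_eq_one_right _ hcx)

variable {D : Type*} [Category* D] [Preadditive D]

theorem exists_iso_biprod_of_idempotent [HasBinaryBiproducts D] [IsIdempotentComplete D]
    {X : D} (e : X ⟶ X) (he : e ≫ e = e) :
    ∃ (Y Z : D) (φ : X ≅ Y ⊞ Z), e = φ.hom ≫ biprod.fst ≫ biprod.inl ≫ φ.inv := by
  obtain ⟨Y, i, p, hip, hpi⟩ := IsIdempotentComplete.idempotents_split X e he
  obtain ⟨Z, j, q, hjq, hqj⟩ := IsIdempotentComplete.idempotents_split X (𝟙 X - e)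
    (Idempotents.idem_of_id_sub_idem e he)
  have hiq : i ≫ q = 0 := by
    calc i ≫ q = i ≫ (q ≫ j) ≫ q := by simp [hjq]
      _ = 0 := by simp [hqj, ← hpi, reassoc_of% hip]
  have hjp : j ≫ p = 0 := by
    calc j ≫ p = (j ≫ q) ≫ j ≫ (p ≫ i) ≫ p := by simp [hip, hjq]
      _ = j ≫ (q ≫ j) ≫ (p ≫ i) ≫ p := by simp
      _ = 0 := by simp [hqj, hpi, reassoc_of% he]
  let b : BinaryBicone Y Z :=
    { pt := X, fst := p, snd := q, inl := i, inr := j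
      inl_fst := hip, inl_snd := hiq, inr_fst := hjp, inr_snd := hjq }
  have hb : b.IsBilimit := isBinaryBilimitOfTotal b (by simp [b, hpi, hqj])
  exact ⟨Y, Z, biprod.uniqueUpToIso Y Z hb, by simp [b, hpi]⟩

theorem eq_zero_or_eq_id_of_indecomposable [HasBinaryBiproducts D] [IsIdempotentComplete D]
    {X : D} (hX : Indecomposable X) (e : X ⟶ X) (he : e ≫ e = e) : e = 0 ∨ e = 𝟙 X := by
  obtain ⟨Y, Z, φ, rfl⟩ := exists_iso_biprod_of_idempotent e he
  refine (hX.2 Y Z φ).imp (fun hY => ?_) (fun hZ => ?_)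
  · simp [hY.eq_of_tgt (biprod.fst : Y ⊞ Z ⟶ Y) 0]
  · have htotal : biprod.fst ≫ biprod.inl = 𝟙 (Y ⊞ Z) := by
      rw [← biprod.total, hZ.eq_of_tgt (biprod.snd : Y ⊞ Z ⟶ Z) 0, zero_comp, add_zero]
    simp [reassoc_of% htotal]

theorem isLocalRing_end_of_indecomposable [HasBinaryBiproducts D] [IsIdempotentComplete D]
    {X : D} [IsArtinianRing (End X)] (hX : Indecomposable X) : IsLocalRing (End X) :=
  have : Nontrivial (End X) := ⟨1, 0, fun h => hX.1 ((IsZero.iff_id_eq_zero X).2 h)⟩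
  isLocalRing_of_isIdempotentElem_eq_zero_or_one fun e he =>
    eq_zero_or_eq_id_of_indecomposable hX e he

variable (k : Type*) [Field k] [Linear k D]

theorem finrank_end_lt_of_retract {A X : D} [FiniteDimensional k (X ⟶ X)] (r : Retract A X)
    (hr : ¬ IsIso r.i) : Module.finrank k (A ⟶ A) < Module.finrank k (X ⟶ X) := by
  let T : (A ⟶ A) →ₗ[k] (X ⟶ X) := Linear.leftComp k X r.r ∘ₗ Linear.rightComp k A r.i
  have hT (f : A ⟶ A) : T f = r.r ≫ f ≫ r.i := rfl
  have hinj : Function.Injective T := fun f g hfg => by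
    simpa [hT] using congrArg (fun t => r.i ≫ t ≫ r.r) hfg
  have hne : LinearMap.range T ≠ ⊤ := fun htop => hr <| by
    obtain ⟨f, hf⟩ : 𝟙 X ∈ LinearMap.range T := htop ▸ Submodule.mem_top
    have hfi : f ≫ r.i = r.i := by simpa [hT] using congrArg (r.i ≫ ·) hf
    exact ⟨r.r, r.retract, by rw [← hf, hT, hfi]⟩
  rw [← LinearMap.finrank_range_of_inj hinj]
  exact Submodule.finrank_lt hne

theorem finrank_end_lt_of_iso_biprod [HasBinaryBiproducts D] {A B X : D}
    [FiniteDimensional k (X ⟶ X)] (φ : X ≅ A ⊞ B) (hB : ¬ IsZero B) :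
    Module.finrank k (A ⟶ A) < Module.finrank k (X ⟶ X) :=
  finrank_end_lt_of_retract k ⟨biprod.inl ≫ φ.inv, φ.hom ≫ biprod.fst, by simp⟩ fun h =>
    hB ((Biprod.isIso_inl_iff_isZero A B).1 (IsIso.of_isIso_comp_right _ φ.inv))

theorem isSumOfIndecomposables_of_finiteDimensional [HasBinaryBiproducts D]
    [∀ X : D, FiniteDimensional k (X ⟶ X)] (X : D) : IsSumOfIndecomposables X := by
  induction hn : Module.finrank k (X ⟶ X) using Nat.strong_induction_on generalizing X with
  | _ n ih =>
    subst hn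
    by_cases hX0 : IsZero X
    · exact .of_isZero hX0
    by_cases hX : Indecomposable X
    · exact .of_indecomposable hX
    obtain ⟨A, B, φ, hA, hB⟩ : ∃ (A B : D) (_ : X ≅ A ⊞ B), ¬ IsZero A ∧ ¬ IsZero B := by
      simpa [Indecomposable, hX0] using hX
    exact .of_iso_biprod φ (ih _ (finrank_end_lt_of_iso_biprod k φ hB) A rfl)
      (ih _ (finrank_end_lt_of_iso_biprod k (φ ≪≫ biprod.braiding A B) hA) B rfl)

theorem isKrullSchmidt_of_finiteDimensional [HasBinaryBiproducts D] [IsIdempotentComplete D]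
    [∀ X : D, FiniteDimensional k (X ⟶ X)] : IsKrullSchmidt D where
  isSumOfIndecomposables := isSumOfIndecomposables_of_finiteDimensional k
  isLocalRing_end {X} hX :=
    have : FiniteDimensional k (End X) := inferInstanceAs (FiniteDimensional k (X ⟶ X))
    have : IsArtinianRing (End X) := .of_finite k (End X)
    isLocalRing_end_of_indecomposable hX

end FiniteDimensional

section TwoSidedOrder

open Bicategory

theorem isSummand_iff_nonempty_retract {a b : C} {G F : a ⟶ b} :
    IsSummand G F ↔ Nonempty (Retract G F) :=
  ⟨fun ⟨ι, π, h⟩ => ⟨⟨ι, π, h⟩⟩, fun ⟨r⟩ => ⟨r.i, r.r, r.retract⟩⟩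

theorem leLR_of_leR_of_leL {F L G : OneMor C} (hFL : leR F L) (hLG : leL L G) : leLR F G := by
  obtain ⟨a, b, F⟩ := F
  obtain ⟨a', d, L⟩ := L
  obtain ⟨c, d', G⟩ := G
  obtain ⟨rfl : a = a', H₂, hL⟩ := hFL
  obtain ⟨rfl : d = d', H₁, hG⟩ := hLG
  obtain ⟨r⟩ := isSummand_iff_nonempty_retract.1 hL
  obtain ⟨s⟩ := isSummand_iff_nonempty_retract.1 hG
  exact ⟨H₁, H₂, isSummand_iff_nonempty_retract.2 ⟨s.trans (r.map (precomp d H₁))⟩⟩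

theorem leLR_of_leL_of_leR {F L G : OneMor C} (hFL : leL F L) (hLG : leR L G) : leLR F G := by
  obtain ⟨a, b, F⟩ := F
  obtain ⟨c, b', L⟩ := L
  obtain ⟨c', d, G⟩ := G
  obtain ⟨rfl : b = b', H₁, hL⟩ := hFL
  obtain ⟨rfl : c = c', H₂, hG⟩ := hLG
  obtain ⟨r⟩ := isSummand_iff_nonempty_retract.1 hL
  obtain ⟨s⟩ := isSummand_iff_nonempty_retract.1 hG
  exact ⟨H₁, H₂, isSummand_iff_nonempty_retract.2
    ⟨(s.trans (r.map (postcomp c H₂))).trans (.ofIso (α_ H₁ F H₂))⟩⟩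

variable [∀ a b : C, Preadditive (a ⟶ b)] [∀ a b : C, HasFiniteBiproducts (a ⟶ b)]

theorem indec_iff_indecomposable {a b : C} {F : a ⟶ b} : Indec F ↔ Indecomposable F :=
  ⟨fun h => ⟨h.1, fun G H φ => h.2 G H ⟨φ⟩⟩, fun h => ⟨h.1, fun G H ⟨φ⟩ => h.2 G H φ⟩⟩

theorem exists_indec_isSummand (hKS : ∀ a b : C, IsKrullSchmidt (a ⟶ b)) {a b c d : C}
    (Φ : (a ⟶ b) ⥤ (c ⟶ d)) [Φ.Additive] {G : c ⟶ d} (hG : Indec G) {X : a ⟶ b}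
    (h : IsSummand G (Φ.obj X)) :
    ∃ L : a ⟶ b, Indec L ∧ IsSummand L X ∧ IsSummand G (Φ.obj L) := by
  have := (hKS c d).isLocalRing_end (indec_iff_indecomposable.1 hG)
  simp only [isSummand_iff_nonempty_retract, indec_iff_indecomposable] at h ⊢
  exact ((hKS a b).isSumOfIndecomposables X).exists_indecomposable_retract Φ h.some

theorem exists_leR_leL_of_leLR (hKS : ∀ a b : C, IsKrullSchmidt (a ⟶ b))
    (whiskerLeft_add : ∀ {a b c : C} (f : a ⟶ b) {g h : b ⟶ c} (η θ : g ⟶ h),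
      f ◁ (η + θ) = f ◁ η + f ◁ θ)
    {F G : OneMor C} (hG : IndecM G) (hFG : leLR F G) :
    ∃ L : OneMor C, IndecM L ∧ leR F L ∧ leL L G := by
  obtain ⟨H₁, H₂, h⟩ := hFG
  have : (precomp G.tgt H₁).Additive := ⟨whiskerLeft_add H₁ _ _⟩
  obtain ⟨L, hL, hFL, hLG⟩ := exists_indec_isSummand hKS (precomp G.tgt H₁) hG h
  exact ⟨⟨F.src, G.tgt, L⟩, hL, ⟨rfl, H₂, hFL⟩, ⟨rfl, H₁, hLG⟩⟩

theorem exists_leL_leR_of_leLR (hKS : ∀ a b : C, IsKrullSchmidt (a ⟶ b))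
    (whiskerRight_add : ∀ {a b c : C} {f g : a ⟶ b} (η θ : f ⟶ g) (h : b ⟶ c),
      (η + θ) ▷ h = η ▷ h + θ ▷ h)
    {F G : OneMor C} (hG : IndecM G) (hFG : leLR F G) :
    ∃ L : OneMor C, IndecM L ∧ leL F L ∧ leR L G := by
  obtain ⟨H₁, H₂, h⟩ := hFG
  have : (postcomp G.src H₂).Additive := ⟨whiskerRight_add _ _ H₂⟩
  obtain ⟨r⟩ := isSummand_iff_nonempty_retract.1 h
  have h' : IsSummand G.mor ((H₁ ≫ F.mor) ≫ H₂) :=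
    isSummand_iff_nonempty_retract.2 ⟨r.trans (.ofIso (α_ H₁ F.mor H₂).symm)⟩
  obtain ⟨L, hL, hFL, hLG⟩ := exists_indec_isSummand hKS (postcomp G.src H₂) hG h'
  exact ⟨⟨G.src, F.tgt, L⟩, hL, ⟨rfl, H₁, hFL⟩, ⟨rfl, H₂, hLG⟩⟩

theorem leLR_eq_leR_comp_leL_general (hKS : ∀ a b : C, IsKrullSchmidt (a ⟶ b))
    (whiskerLeft_add : ∀ {a b c : C} (f : a ⟶ b) {g h : b ⟶ c} (η θ : g ⟶ h),
      f ◁ (η + θ) = f ◁ η + f ◁ θ)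
    (whiskerRight_add : ∀ {a b c : C} {f g : a ⟶ b} (η θ : f ⟶ g) (h : b ⟶ c),
      (η + θ) ▷ h = η ▷ h + θ ▷ h)
    (F G : OneMor C) (hG : IndecM G) :
    (leLR F G ↔ ∃ L : OneMor C, IndecM L ∧ leR F L ∧ leL L G) ∧
    (leLR F G ↔ ∃ L' : OneMor C, IndecM L' ∧ leL F L' ∧ leR L' G) :=
  ⟨⟨exists_leR_leL_of_leLR hKS whiskerLeft_add hG,
      fun ⟨_, _, hFL, hLG⟩ => leLR_of_leR_of_leL hFL hLG⟩,
    ⟨exists_leL_leR_of_leLR hKS whiskerRight_add hG,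
      fun ⟨_, _, hFL, hLG⟩ => leLR_of_leL_of_leR hFL hLG⟩⟩

end TwoSidedOrder

theorem FiatAxioms.isKrullSchmidt {k : Type*} [Field k] [IsAlgClosed k] [Bicategory.Strict C]
    [∀ a b : C, Preadditive (a ⟶ b)] [∀ a b : C, HasFiniteBiproducts (a ⟶ b)]
    [∀ a b : C, Linear k (a ⟶ b)] (S : FiatAxioms k C) (a b : C) : IsKrullSchmidt (a ⟶ b) :=
  have := S.idemComplete a b
  have (f : a ⟶ b) : FiniteDimensional k (f ⟶ f) := S.finDim a b f f
  isKrullSchmidt_of_finiteDimensional k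

/-- In a fiat category, on indecomposable 1-morphisms, the two-sided
preorder `≤_LR` is the composite of `≤_R` followed by `≤_L`, and also the composite of
`≤_L` followed by `≤_R`. -/
theorem leLR_eq_leR_comp_leL
    (k : Type*) [Field k] [IsAlgClosed k]
    {C : Type u} [Bicategory.{w, v} C] [Bicategory.Strict C]
    [∀ a b : C, Preadditive (a ⟶ b)] [∀ a b : C, HasFiniteBiproducts (a ⟶ b)]
    [∀ a b : C, Linear k (a ⟶ b)]
    (S : FiatAxioms k C)
    (F G : OneMor C) (hF : IndecM F) (hG : IndecM G) :
    (leLR F G ↔ ∃ L : OneMor C, IndecM L ∧ leR F L ∧ leL L G) ∧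
    (leLR F G ↔ ∃ L' : OneMor C, IndecM L' ∧ leL F L' ∧ leR L' G) := by
  exact leLR_eq_leR_comp_leL_general S.isKrullSchmidt S.whiskerLeft_add S.whiskerRight_add F G hG

end CellTwoRep
end

section
/- Let C be a finitary 2-category over k, let i and j be objects of C, let H: i -> i and F: i -> j be indecomposable 1-morphisms, and let m and c be positive integers such that H o H is isomorphic to H^{⊕m} in C(i,i) and F o H is isomorphic to F^{⊕c} in C(i,j). Then c = m. -/
/-!
Write `F^n` for the biproduct of `n` copies of `F`. Computing `F ∘ H ∘ H` with the two bracketings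
gives `F^(c * c)` through `(F ∘ H) ∘ H` and `F^(m * c)` through `F ∘ (H ∘ H)`. The ring `End F` is a
nonzero finite-dimensional algebra, so it has invariant basis number, which forces
`c * c = m * c`; now cancel `c`.
-/

open CategoryTheory CategoryTheory.Limits

universe w v u

attribute [local instance] CategoryTheory.Limits.hasBinaryBiproducts_of_finite_biproducts

namespace CellTwoRep

variable {C : Type u} [Bicategory.{w, v} C]

/-- The axioms of a `k`-finitary 2-category, on top of a strict bicategory whose
hom-categories are additive and `k`-linear. -/
structure FinitaryAxioms (k : Type*) [Field k] [IsAlgClosed k]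
    (C : Type u) [Bicategory.{w, v} C] [Bicategory.Strict C]
    [∀ a b : C, Preadditive (a ⟶ b)] [∀ a b : C, HasFiniteBiproducts (a ⟶ b)]
    [∀ a b : C, Linear k (a ⟶ b)] : Prop where
  /-- finitely many objects -/
  finObj : Finite C
  /-- each hom-category is idempotent complete -/
  idemComplete : ∀ a b : C, IsIdempotentComplete (a ⟶ b)
  /-- finite-dimensional spaces of 2-morphisms -/
  finDim : ∀ (a b : C) (f g : a ⟶ b), FiniteDimensional k (f ⟶ g)
  /-- finitely many isomorphism classes of indecomposable 1-morphisms -/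
  finIndec : ∀ a b : C, ∃ (n : ℕ) (ι : Fin n → (a ⟶ b)),
      ∀ F : a ⟶ b, Indec F → ∃ i, Nonempty (F ≅ ι i)
  /-- each identity 1-morphism is indecomposable -/
  idIndec : ∀ a : C, Indec (𝟙 a)
  /-- horizontal composition is additive in the second variable -/
  whiskerLeft_add : ∀ {a b c : C} (f : a ⟶ b) {g h : b ⟶ c} (η θ : g ⟶ h),
      Bicategory.whiskerLeft f (η + θ) =
        Bicategory.whiskerLeft f η + Bicategory.whiskerLeft f θ
  /-- horizontal composition is additive in the first variable -/
  whiskerRight_add : ∀ {a b c : C} {f g : a ⟶ b} (η θ : f ⟶ g) (h : b ⟶ c),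
      Bicategory.whiskerRight (η + θ) h =
        Bicategory.whiskerRight η h + Bicategory.whiskerRight θ h

section BiproductPowers

variable {D : Type*} [Category* D] [Preadditive D]

/-- The isomorphism `G(X^α) ≅ Y^(α × β)` induced by `G(X) ≅ Y^β`, for an additive functor `G`. It
tracks multiplicities under composition with a fixed 1-morphism. The index type is a `Σ`-type, the
form in which Mathlib flattens iterated biproducts. -/
noncomputable def mapBiproductConstIso [HasFiniteBiproducts D] {E : Type*} [Category* E]
    [Preadditive E] [HasFiniteBiproducts E] (G : D ⥤ E) [G.Additive] {α β : Type} [Finite α]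
    [Finite β] {X : D} {Y : E} (e : G.obj X ≅ ⨁ fun _ : β => Y) :
    G.obj (⨁ fun _ : α => X) ≅ ⨁ fun _ : Σ _ : α, β => Y :=
  G.mapBiproduct (fun _ => X) ≪≫ biproduct.mapIso (fun _ => e) ≪≫
    biproductBiproductIso (fun _ => β) (fun _ _ => Y)

theorem card_eq_of_biproduct_const_iso [HasFiniteBiproducts D] {X : D}
    [InvariantBasisNumber (End X)] {α β : Type} [Finite α] [Finite β]
    (e : (⨁ fun _ : α => X) ≅ ⨁ fun _ : β => X) : Nat.card α = Nat.card β := by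
  have orthogonal : HomOrthogonal fun _ : Unit => X := Subsingleton.pairwise
  obtain ⟨σ, -⟩ := orthogonal.equiv_of_iso (f := fun _ => ()) (g := fun _ => ()) e
  exact Nat.card_congr σ

theorem invariantBasisNumber_end (R : Type*) [CommRing R] [IsNoetherianRing R] [Linear R D] {X : D}
    [Module.Finite R (End X)] (hX : ¬ IsZero X) : InvariantBasisNumber (End X) := by
  have : Nontrivial (End X) := nontrivial_of_ne _ _ (mt (IsZero.iff_id_eq_zero X).2 hX)
  have : IsNoetherianRing (End X) := .of_finite R (End X)
  infer_instance

end BiproductPowers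

theorem multiplicity_of_idempotent_onemorphism_general {i j : C}
    [Preadditive (i ⟶ i)] [HasFiniteBiproducts (i ⟶ i)]
    [Preadditive (i ⟶ j)] [HasFiniteBiproducts (i ⟶ j)]
    {H : i ⟶ i} {F : i ⟶ j} [(Bicategory.precomp j H).Additive]
    [(Bicategory.postcomp i F).Additive] [InvariantBasisNumber (End F)]
    {m c : ℕ} (hc : 0 < c)
    (eHH : H ≫ H ≅ ⨁ fun _ : Fin m => H) (eFH : H ≫ F ≅ ⨁ fun _ : Fin c => F) :
    c = m := by
  have viaFH : H ≫ H ≫ F ≅ ⨁ fun _ : Σ _ : Fin c, Fin c => F :=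
    (Bicategory.precomp j H).mapIso eFH ≪≫ mapBiproductConstIso (Bicategory.precomp j H) eFH
  have viaHH : (H ≫ H) ≫ F ≅ ⨁ fun _ : Σ _ : Fin m, Fin c => F :=
    (Bicategory.postcomp i F).mapIso eHH ≪≫ mapBiproductConstIso (Bicategory.postcomp i F) eFH
  have hcard : c * c = m * c := by
    simpa using card_eq_of_biproduct_const_iso
      (viaFH.symm ≪≫ (Bicategory.associator H H F).symm ≪≫ viaHH)
  exact Nat.eq_of_mul_eq_mul_right hc hcard

/-- If `H : i ⟶ i` and `F : i ⟶ j` are indecomposable 1-morphisms of a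
finitary 2-category with `H ∘ H ≅ H^{⊕m}` and `F ∘ H ≅ F^{⊕c}` for positive integers
`m, c`, then `c = m`. (Here `F ∘ H` denotes the horizontal composite applying `H` first,
i.e. `H ≫ F`.) -/
theorem multiplicity_of_idempotent_onemorphism
    (k : Type*) [Field k] [IsAlgClosed k]
    {C : Type u} [Bicategory.{w, v} C] [Bicategory.Strict C]
    [∀ a b : C, Preadditive (a ⟶ b)] [∀ a b : C, HasFiniteBiproducts (a ⟶ b)]
    [∀ a b : C, Linear k (a ⟶ b)]
    (S : FinitaryAxioms k C)
    (i j : C) (H : i ⟶ i) (F : i ⟶ j) (hH : Indec H) (hF : Indec F)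
    (m c : ℕ) (hm : 0 < m) (hc : 0 < c)
    (eHH : Nonempty ((H ≫ H) ≅ ⨁ (fun _ : Fin m => H)))
    (eFH : Nonempty ((H ≫ F) ≅ ⨁ (fun _ : Fin c => F))) :
    c = m := by
  have : (Bicategory.precomp j H).Additive := ⟨S.whiskerLeft_add H _ _⟩
  have : (Bicategory.postcomp i F).Additive := ⟨S.whiskerRight_add _ _ F⟩
  have : Module.Finite k (End F) := S.finDim i j F F
  have := invariantBasisNumber_end k hF.1
  exact multiplicity_of_idempotent_onemorphism_general hc eHH.some eFH.some

end CellTwoRep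
end

section
/- Let D = C[X]/(X^2) be the algebra of dual numbers over the complex numbers and let phi: C -> D be the structure algebra map. Then the restriction of scalars functor ModuleCat D -> ModuleCat C along phi is left adjoint to the extension of scalars functor ModuleCat C -> ModuleCat D, V |-> D ⊗_C V. (Together with the standard adjunction in which extension of scalars is left adjoint to restriction of scalars, this shows that extension of scalars along phi is biadjoint to restriction of scalars, reflecting that D is a self-injective algebra.) -/
open CategoryTheory

/-- The algebra `D = ℂ[X]/(X²)` of dual numbers over the complex numbers. -/
noncomputable abbrev DualNum : Type :=
  Polynomial ℂ ⧸ Ideal.span ({Polynomial.X ^ 2} : Set (Polynomial ℂ))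

/-! A linear form `λ` on a finite projective `R`-algebra `S` with perfect pairing
`(s, t) ↦ λ (s * t)` identifies `S` with its `R`-dual, hence `S ⊗ V` with `Hom_R(S, V)` for every
`V`: extension of scalars agrees with coextension of scalars, which is right adjoint to
restriction. If `S` has a basis `1, x, …, x ^ (n - 1)`, the coefficient of `x ^ (n - 1)` is such a
form, because its Gram matrix is unitriangular up to reversing the order of the columns. -/

open Module TensorProduct

universe v u₁ u₂

section FrobeniusForm

variable {R : Type u₁} {S : Type u₂} [CommRing R] [CommRing S] [Algebra R S]

/-- A linear form on a commutative algebra is a Frobenius form if the bilinear form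
`(s, t) ↦ form (s * t)` is a perfect pairing. -/
def IsFrobeniusForm (form : Dual R S) : Prop :=
  ((LinearMap.mul R S).compr₂ form).IsPerfPair

/-- The map `S ⊗ V → Hom_R(S, V)` sending `s ⊗ x` to `t ↦ form (s * t) • x`. -/
noncomputable def frobeniusTensorHom (form : Dual R S) (V : Type*) [AddCommGroup V] [Module R V] :
    S ⊗[R] V →ₗ[R] S →ₗ[R] V :=
  dualTensorHom R S V ∘ₗ ((LinearMap.mul R S).compr₂ form).rTensor V

variable {V : Type*} [AddCommGroup V] [Module R V]

lemma frobeniusTensorHom_tmul (form : Dual R S) (s : S) (x : V) (t : S) :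
    frobeniusTensorHom form V (s ⊗ₜ x) t = form (s * t) • x :=
  rfl

lemma frobeniusTensorHom_smul (form : Dual R S) (s : S) (x : S ⊗[R] V) (t : S) :
    frobeniusTensorHom form V (s • x) t = frobeniusTensorHom form V x (t * s) := by
  induction x with
  | zero => simp
  | tmul u x => rw [smul_tmul', smul_eq_mul, frobeniusTensorHom_tmul, frobeniusTensorHom_tmul,
      mul_comm s u, mul_assoc, mul_comm s t]
  | add x y hx hy => simp only [smul_add, map_add, LinearMap.add_apply, hx, hy]

lemma IsFrobeniusForm.frobeniusTensorHom_bijective [Module.Finite R S] [Projective R S]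
    {form : Dual R S} (h : IsFrobeniusForm form) :
    Function.Bijective (frobeniusTensorHom form V) := by
  have : ((LinearMap.mul R S).compr₂ form).IsPerfPair := h
  exact dualTensorHom_bijective.comp
    (LinearEquiv.rTensor V ((LinearMap.mul R S).compr₂ form).toPerfPair).bijective

end FrobeniusForm

section PowerBasis

variable {R S : Type*} [CommRing R] [CommRing S] [Algebra R S] (pb : PowerBasis R S)

/-- The coefficient of the highest power `gen ^ (dim - 1)` in a power basis. -/
noncomputable def powerBasisTopCoeff : Dual R S :=
  pb.basis.constr R fun i => if (i : ℕ) + 1 = pb.dim then 1 else 0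

lemma powerBasisTopCoeff_gen_pow {k : ℕ} (hk : k < pb.dim) :
    powerBasisTopCoeff pb (pb.gen ^ k) = if k + 1 = pb.dim then 1 else 0 := by
  rw [← pb.basis_eq_pow ⟨k, hk⟩, powerBasisTopCoeff, Basis.constr_basis]

lemma exists_powerBasisTopCoeff_mul_gen_pow_eq (ψ : Dual R S) {m : ℕ} (hm : m ≤ pb.dim) :
    ∃ s, ∀ j < m, powerBasisTopCoeff pb (s * pb.gen ^ j) = ψ (pb.gen ^ j) := by
  induction m with
  | zero => exact ⟨0, by simp⟩
  | succ m ih =>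
    obtain ⟨s, hs⟩ := ih (by lia)
    have topCoeff_shift {j : ℕ} (hj : j ≤ m) :
        powerBasisTopCoeff pb (pb.gen ^ (pb.dim - 1 - m) * pb.gen ^ j) =
          if j = m then 1 else 0 := by
      rw [← pow_add, powerBasisTopCoeff_gen_pow pb (by lia)]
      exact if_congr (by lia) rfl rfl
    let c := ψ (pb.gen ^ m) - powerBasisTopCoeff pb (s * pb.gen ^ m)
    refine ⟨s + c • pb.gen ^ (pb.dim - 1 - m), fun j hj => ?_⟩
    rw [add_mul, smul_mul_assoc, map_add, map_smul, topCoeff_shift (by lia)]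
    obtain rfl | hjm := eq_or_ne j m
    · simp [c]
    · simp [hjm, hs j (by lia)]

lemma isFrobeniusForm_powerBasisTopCoeff : IsFrobeniusForm (powerBasisTopCoeff pb) := by
  have := Module.Finite.of_basis pb.basis
  have := Module.Free.of_basis pb.basis
  let pairing := (LinearMap.mul R S).compr₂ (powerBasisTopCoeff pb)
  have surjective : Function.Surjective pairing := fun ψ => by
    obtain ⟨s, hs⟩ := exists_powerBasisTopCoeff_mul_gen_pow_eq pb ψ le_rfl
    refine ⟨s, pb.basis.ext fun i => ?_⟩
    rw [pb.basis_eq_pow]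
    exact hs i i.isLt
  have injective : Function.Injective pairing :=
    OrzechProperty.injective_of_surjective_of_injective pb.basis.toDual _
      pb.basis.toDual_injective surjective
  exact .of_bijective _ ⟨injective, surjective⟩

end PowerBasis

section ChangeOfRings

open ModuleCat

variable {R : Type u₁} {S : Type u₂} [CommRing R] [CommRing S] [Algebra R S]

variable (R S) in
/-- The identity of `S`, from the given `R`-module structure on `S` to the one obtained by
restricting scalars along `algebraMap R S`; these structures agree only propositionally. -/
def selfEquivRestrictScalars : S ≃ₗ[R] (restrictScalars (algebraMap R S)).obj (ModuleCat.of S S) :=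
  { AddEquiv.refl S with map_smul' := fun r s => Algebra.smul_def r s }

/-- The base change `S ⊗ V` as an extension of scalars. -/
noncomputable def tensorEquivExtendScalars (V : ModuleCat.{v} R) :
    S ⊗[R] V ≃ₗ[S] (extendScalars (algebraMap R S)).obj V :=
  let e : S ⊗[R] V ≃+ (extendScalars (algebraMap R S)).obj V :=
    (LinearEquiv.rTensor V (selfEquivRestrictScalars R S)).toAddEquiv
  e.toLinearEquiv fun s x => by
    induction x with
    | zero => simp only [smul_zero, map_zero]
    | tmul => rfl
    | add x y hx hy => simp only [smul_add, map_add, hx, hy]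

/-- The additive group `Hom_R(S, V)` as a coextension of scalars. It is only additive because
`S →ₗ[R] V` carries no `S`-action by precomposition in Mathlib. -/
noncomputable def homEquivCoextendScalars (V : ModuleCat.{v} R) :
    (S →ₗ[R] V) ≃+ (coextendScalars (algebraMap R S)).obj V :=
  ((selfEquivRestrictScalars R S).congrLeft V R).toAddEquiv

namespace IsFrobeniusForm

variable [Module.Finite R S] [Projective R S] {form : Dual R S}

/-- The isomorphism `s ⊗ x ↦ (t ↦ form (s * t) • x)` from the base change to the coextension of
scalars. -/
noncomputable def tensorEquivCoextendScalars (h : IsFrobeniusForm form) (V : ModuleCat.{v} R) :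
    S ⊗[R] V ≃ₗ[S] (coextendScalars (algebraMap R S)).obj V :=
  let e := (AddEquiv.ofBijective _ h.frobeniusTensorHom_bijective).trans
    (homEquivCoextendScalars V)
  e.toLinearEquiv fun s x => CoextendScalars.ext <| LinearMap.ext fun t : S =>
    frobeniusTensorHom_smul form s x t

/-- A Frobenius form identifies extension with coextension of scalars. -/
noncomputable def extendScalarsIsoCoextendScalars (h : IsFrobeniusForm form) :
    extendScalars.{u₁, u₂, max v u₂} (algebraMap R S) ≅
      coextendScalars.{u₁, u₂, max v u₂} (algebraMap R S) :=
  NatIso.ofComponents (fun V =>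
    ((tensorEquivExtendScalars V).symm.trans (h.tensorEquivCoextendScalars V)).toModuleIso)
    fun g => ExtendScalars.hom_ext fun x => CoextendScalars.ext <| LinearMap.ext fun t : S =>
      (map_smul g.hom (form (1 * t)) x).symm

/-- A Frobenius form makes restriction of scalars left adjoint to extension of scalars. -/
noncomputable def restrictExtendScalarsAdj (h : IsFrobeniusForm form) :
    restrictScalars.{max v u₂} (algebraMap R S) ⊣
      extendScalars.{u₁, u₂, max v u₂} (algebraMap R S) :=
  (restrictCoextendScalarsAdj.{v} (algebraMap R S)).ofNatIsoRight
    h.extendScalarsIsoCoextendScalars.symm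

end IsFrobeniusForm

end ChangeOfRings

theorem restrictScalars_leftAdjoint_extendScalars_dualNumbers_general
    {R : Type u₁} {S : Type u₂} [CommRing R] [CommRing S] [Algebra R S] (pb : PowerBasis R S) :
    Nonempty
      (ModuleCat.restrictScalars.{max v u₂} (algebraMap R S) ⊣
        ModuleCat.extendScalars.{u₁, u₂, max v u₂} (algebraMap R S)) := by
  have := Module.Finite.of_basis pb.basis
  have := Module.Free.of_basis pb.basis
  exact ⟨(isFrobeniusForm_powerBasisTopCoeff pb).restrictExtendScalarsAdj⟩

/-- For the dual numbers `D = ℂ[X]/(X²)` with structure map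
`φ = algebraMap ℂ D`, the restriction of scalars functor `ModuleCat D ⥤ ModuleCat ℂ`
along `φ` is left adjoint to the extension of scalars functor
`ModuleCat ℂ ⥤ ModuleCat D`, `V ↦ D ⊗_ℂ V`. -/
theorem restrictScalars_leftAdjoint_extendScalars_dualNumbers :
    Nonempty
      (ModuleCat.restrictScalars (algebraMap ℂ DualNum) ⊣
        ModuleCat.extendScalars (algebraMap ℂ DualNum)) := by
  exact restrictScalars_leftAdjoint_extendScalars_dualNumbers_general
    (AdjoinRoot.powerBasis' (Polynomial.monic_X_pow 2))
end
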